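/- Variance upper bound for subsampled OLS (Theorem 4.3): There exist absolute constants C > 0 and C' > 0 such that the following holds. Let n ≥ p ≥ 1, let X ∈ ℝ^{n×p} have Xᵀ X invertible, let y ∈ ℝⁿ, and let π be a sampling distribution with π i > 0 for all i. For every δ ∈ (0,1) and every m with m ≥ C · θ_max(X) · p · log(p/δ), there exists an event ζ ⊆ Ω with P(ζ) ≥ 1 − δ such that (S(ω) X)ᵀ S(ω) X is invertible for every ω ∈ ζ and Var_ζ(β̃) ≤ (1 − δ)⁻¹ · (Δ(X) + ε · ‖r‖²), where ε = C' · √(log(p/δ) · θ_max(X)³ · p³ / m³). -/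

import Mathlib

/-!
Let `U = X T` be an orthonormal basis of the column space of `X` (`exists_whitening`), so that
`ℓ_i = ‖u_i‖²`, and put `R = p θ_max`. With `d` the coordinates of `X (β̃ - β_OLS)` in `U`, the
sketched normal equations read `(SU)ᵀ(SU) d = (SU)ᵀ S r`, and the excess loss is `‖d‖²`. On the
event `ζ` where `(SU)ᵀ(SU) ⪰ 1 - η` this gives `(1 - η)² ‖d‖² ≤ ‖(SU)ᵀ S r‖²` (`good_event`). Since
`Uᵀ r = 0`, the vector `(SU)ᵀ S r` is a sum of centered i.i.d. terms with second moment `Δ(X)`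
(`noise_second_moment`). Hence `Var_ζ ≤ P(ζ)⁻¹ (1 - η)⁻² Δ(X)`; for `η = √(2 R log(p/δ) / m)`, which
is at most `1/2`, one has `(1 - η)⁻² ≤ 1 + 6η`, and `Δ(X) ≤ (R/m) ‖r‖²` turns `6 η Δ(X)` into the
error term.

That `P(ζ) ≥ 1 - δ` is the lower tail of the matrix Chernoff inequality (`matrix_chernoff`), with
the dimension entering only through a prefactor `p`. It is proved here without the exponential
trace inequalities of Golden-Thompson or Lieb. For `A = ∑_s w_s w_sᵀ` with `w_s = u_i / √π_i` for
the drawn `i`, use the potential `tr (c - A)^q` with `c = q/t + m R`; up to the normalization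
`c^q` it tends to `tr exp(-tA)` as `q → ∞`. One draw replaces `K` by `K - wwᵀ`, and for such
rank-one downdates expanding the power, together with Chebyshev's inequality
`(wᵀKʲw)(wᵀKˡw) ≤ ‖w‖² wᵀKʲ⁺ˡw`, gives
`tr (K - wwᵀ)^q ≤ tr K^q - q wᵀK^(q-1)w + (q(q-1)/2) ‖w‖² wᵀK^(q-2)w` (`trace_downdate`).
Taking expectations with `E wwᵀ = 1` yields a contraction factor per draw (`trace_step`), and
Markov's inequality followed by `q → ∞` gives the exponential bound.
-/

open Matrix Finset

noncomputable section

/-- Probability of the i.i.d. sample `ω` of `m` draws from the sampling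
distribution `π` (pmf of the product measure on `Ω = Fin m → Fin n`). -/
def samplingP {n : ℕ} (π : Fin n → ℝ) {m : ℕ} (ω : Fin m → Fin n) : ℝ :=
  ∏ s, π (ω s)

/-- The sampling matrix `S(ω) ∈ ℝ^{m×n}` with `S(ω)_{s,j} = 1/√(m π_{ω s})` if
`j = ω s` and `0` otherwise. -/
def samplingS {n : ℕ} (π : Fin n → ℝ) {m : ℕ} (ω : Fin m → Fin n) :
    Matrix (Fin m) (Fin n) ℝ :=
  Matrix.of fun s j => if j = ω s then 1 / Real.sqrt (m * π (ω s)) else 0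

/-- The `i`-th leverage score `ℓ_i(X) = x_iᵀ (Xᵀ X)⁻¹ x_i`. -/
def lev {n p : ℕ} (X : Matrix (Fin n) (Fin p) ℝ) (i : Fin n) : ℝ :=
  X i ⬝ᵥ ((Xᵀ * X)⁻¹ *ᵥ X i)

/-- Maximum importance sampling approximation factor
`θ_max(X) = max_i ℓ_i(X)/(p π_i)`. -/
def thetaMax {n p : ℕ} (X : Matrix (Fin n) (Fin p) ℝ) (π : Fin n → ℝ) : ℝ :=
  ⨆ i, lev X i / (p * π i)

/-- Probability of an event `ζ` relative to the pmf `P`. -/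
def eventProb {Ω : Type*} (P : Ω → ℝ) (ζ : Finset Ω) : ℝ :=
  ∑ ω ∈ ζ, P ω

/-- Conditional expectation `E_ζ[f] = P(ζ)⁻¹ ∑_{ω ∈ ζ} P(ω) f(ω)`. -/
def condExp {Ω V : Type*} [AddCommMonoid V] [Module ℝ V]
    (P : Ω → ℝ) (ζ : Finset Ω) (f : Ω → V) : V :=
  (eventProb P ζ)⁻¹ • ∑ ω ∈ ζ, P ω • f ω

/-- Frobenius norm `‖A‖_F = √(trace (Aᵀ A))`. -/
def frobNorm {k l : ℕ} (A : Matrix (Fin k) (Fin l) ℝ) : ℝ :=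
  Real.sqrt ((Aᵀ * A).trace)

/-- Loewner order: `A ⪯ B` iff `B − A` is positive semidefinite. -/
def loewnerLE {k : ℕ} (A B : Matrix (Fin k) (Fin k) ℝ) : Prop :=
  (B - A).PosSemidef

/-- Least-squares loss `L(β) = ‖y − X β‖²`. -/
def lossL {n p : ℕ} (X : Matrix (Fin n) (Fin p) ℝ) (y : Fin n → ℝ)
    (β : Fin p → ℝ) : ℝ :=
  (y - X *ᵥ β) ⬝ᵥ (y - X *ᵥ β)

/-- OLS solution `β_OLS = (Xᵀ X)⁻¹ Xᵀ y`. -/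
def olsSol {n p : ℕ} (X : Matrix (Fin n) (Fin p) ℝ) (y : Fin n → ℝ) : Fin p → ℝ :=
  (Xᵀ * X)⁻¹ *ᵥ (Xᵀ *ᵥ y)

/-- OLS residual `r = y − X β_OLS`. -/
def olsResid {n p : ℕ} (X : Matrix (Fin n) (Fin p) ℝ) (y : Fin n → ℝ) : Fin n → ℝ :=
  y - X *ᵥ olsSol X y

/-- Subsampled OLS estimator `β̃(ω) = ((S(ω) X)ᵀ S(ω) X)⁻¹ (S(ω) X)ᵀ S(ω) y`. -/
def betaTilde {n p : ℕ} (X : Matrix (Fin n) (Fin p) ℝ) (y : Fin n → ℝ)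
    (π : Fin n → ℝ) {m : ℕ} (ω : Fin m → Fin n) : Fin p → ℝ :=
  ((samplingS π ω * X)ᵀ * (samplingS π ω * X))⁻¹ *ᵥ
    ((samplingS π ω * X)ᵀ *ᵥ (samplingS π ω *ᵥ y))

/-- `Δ(X) = rᵀ diag(ℓ_i(X)/(m π_i)) r`. -/
def deltaOLS {n p : ℕ} (X : Matrix (Fin n) (Fin p) ℝ) (y : Fin n → ℝ)
    (π : Fin n → ℝ) (m : ℕ) : ℝ :=
  olsResid X y ⬝ᵥ
    (Matrix.diagonal (fun i => lev X i / (m * π i)) *ᵥ olsResid X y)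

/-! ### Spectral calculus for quadratic forms -/

/-- The spectral theorem for a real symmetric matrix, in a form that gives traces and quadratic
forms of all powers at once. -/
lemma exists_spectral {p : ℕ} (K : Matrix (Fin p) (Fin p) ℝ) (hK : Kᵀ = K) :
    ∃ (V : Matrix (Fin p) (Fin p) ℝ) (e : Fin p → ℝ), Vᵀ * V = 1 ∧ V * Vᵀ = 1 ∧
      ∀ j : ℕ, K ^ j = V * diagonal (fun i => e i ^ j) * Vᵀ := by
  have hH : K.IsHermitian := by
    rw [IsHermitian, conjTranspose_eq_transpose_of_trivial, hK]
  have h1 : (hH.eigenvectorUnitary : Matrix (Fin p) (Fin p) ℝ)ᵀ * hH.eigenvectorUnitary = 1 := by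
    have := Unitary.coe_star_mul_self hH.eigenvectorUnitary
    rwa [star_eq_conjTranspose, conjTranspose_eq_transpose_of_trivial] at this
  have h2 : (hH.eigenvectorUnitary : Matrix (Fin p) (Fin p) ℝ) *
      (hH.eigenvectorUnitary : Matrix (Fin p) (Fin p) ℝ)ᵀ = 1 := mul_eq_one_comm.mp h1
  refine ⟨hH.eigenvectorUnitary, hH.eigenvalues, h1, h2, fun j => ?_⟩
  have hs := hH.spectral_theorem
  rw [Unitary.conjStarAlgAut_apply, star_eq_conjTranspose,
    conjTranspose_eq_transpose_of_trivial] at hs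
  have hd : diagonal ((RCLike.ofReal : ℝ → ℝ) ∘ hH.eigenvalues) = diagonal hH.eigenvalues := rfl
  rw [hd] at hs
  generalize (hH.eigenvectorUnitary : Matrix (Fin p) (Fin p) ℝ) = V at *
  generalize hH.eigenvalues = e at *
  induction j with
  | zero => simp [h2]
  | succ j ih =>
    rw [pow_succ, ih]
    conv_lhs => rw [hs]
    calc V * diagonal (fun i => e i ^ j) * Vᵀ * (V * diagonal e * Vᵀ)
        = V * diagonal (fun i => e i ^ j) * (Vᵀ * V) * diagonal e * Vᵀ := by
          simp only [Matrix.mul_assoc]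
      _ = _ := by
          rw [h1, Matrix.mul_one, Matrix.mul_assoc V, diagonal_mul_diagonal]
          simp only [pow_succ]

lemma quad_spectral {p : ℕ} (V : Matrix (Fin p) (Fin p) ℝ) (e x : Fin p → ℝ) :
    x ⬝ᵥ ((V * diagonal e * Vᵀ) *ᵥ x) = ∑ i, e i * ((Vᵀ *ᵥ x) i) ^ 2 := by
  rw [← mulVec_mulVec, ← mulVec_mulVec, dotProduct_mulVec, ← mulVec_transpose]
  simp only [dotProduct, mulVec_diagonal]
  exact Finset.sum_congr rfl fun i _ => by ring

lemma trace_spectral {p : ℕ} (V : Matrix (Fin p) (Fin p) ℝ) (e : Fin p → ℝ) (h : Vᵀ * V = 1) :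
    (V * diagonal e * Vᵀ).trace = ∑ i, e i := by
  rw [trace_mul_comm, ← Matrix.mul_assoc, h, Matrix.one_mul, trace_diagonal]

lemma norm_spectral {p : ℕ} (V : Matrix (Fin p) (Fin p) ℝ) (x : Fin p → ℝ) (h : V * Vᵀ = 1) :
    ∑ i, ((Vᵀ *ᵥ x) i) ^ 2 = x ⬝ᵥ x := by
  have := quad_spectral V (fun _ => 1) x
  simpa [h] using this.symm

/-- An eigenvalue is the value of the quadratic form at a unit vector. -/
lemma eigenvalue_quad {p : ℕ} (V : Matrix (Fin p) (Fin p) ℝ) (e : Fin p → ℝ)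
    (h : Vᵀ * V = 1) (i : Fin p) :
    ∃ x : Fin p → ℝ, x ⬝ᵥ x = 1 ∧ x ⬝ᵥ ((V * diagonal e * Vᵀ) *ᵥ x) = e i := by
  have h2 : V * Vᵀ = 1 := mul_eq_one_comm.mp h
  have hx : Vᵀ *ᵥ (V *ᵥ Pi.single i 1) = Pi.single i 1 := by
    rw [mulVec_mulVec, h, one_mulVec]
  refine ⟨V *ᵥ Pi.single i 1, ?_, ?_⟩
  · rw [← norm_spectral V _ h2, hx]
    simp [Pi.single_apply]
  · rw [quad_spectral, hx]
    simp [Pi.single_apply]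

/-- The spectral decomposition of a symmetric matrix `K` with `lo ⪯ K ⪯ hi`. -/
lemma exists_spectral_bounds {p : ℕ} (K : Matrix (Fin p) (Fin p) ℝ) (hK : Kᵀ = K) (lo hi : ℝ)
    (hlo : ∀ x, lo * (x ⬝ᵥ x) ≤ x ⬝ᵥ (K *ᵥ x)) (hhi : ∀ x, x ⬝ᵥ (K *ᵥ x) ≤ hi * (x ⬝ᵥ x)) :
    ∃ (V : Matrix (Fin p) (Fin p) ℝ) (e : Fin p → ℝ), V * Vᵀ = 1 ∧
      (∀ i, lo ≤ e i ∧ e i ≤ hi) ∧ (∀ j : ℕ, (K ^ j).trace = ∑ i, e i ^ j) ∧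
      ∀ (j : ℕ) (x : Fin p → ℝ),
        x ⬝ᵥ ((K ^ j) *ᵥ x) = ∑ i, e i ^ j * ((Vᵀ *ᵥ x) i) ^ 2 := by
  obtain ⟨V, e, h1, h2, h⟩ := exists_spectral K hK
  have hK1 : K = V * diagonal e * Vᵀ := by simpa using h 1
  refine ⟨V, e, h2, fun i => ?_, fun j => ?_, fun j x => ?_⟩
  · obtain ⟨x, hx1, hx2⟩ := eigenvalue_quad V e h1 i
    rw [← hK1] at hx2
    have a := hlo x
    have b := hhi x
    rw [hx1, hx2, mul_one] at a b
    exact ⟨a, b⟩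
  · rw [h, trace_spectral _ _ h1]
  · rw [h, quad_spectral]

/-- Chebyshev's sum inequality for the moments of a nonnegative family. -/
lemma moment_chebyshev {p : ℕ} (e c : Fin p → ℝ) (he : ∀ i, 0 ≤ e i) (hc : ∀ i, 0 ≤ c i)
    (j k : ℕ) :
    (∑ i, e i ^ j * c i) * (∑ i, e i ^ k * c i) ≤
      (∑ i, e i ^ 0 * c i) * (∑ i, e i ^ (j + k) * c i) := by
  have key : 0 ≤ ∑ a, ∑ b, (e a ^ j - e b ^ j) * (e a ^ k - e b ^ k) * (c a * c b) := by
    refine Finset.sum_nonneg fun a _ => Finset.sum_nonneg fun b _ => ?_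
    refine mul_nonneg ?_ (mul_nonneg (hc a) (hc b))
    rcases le_total (e a) (e b) with h | h
    · exact mul_nonneg_of_nonpos_of_nonpos
        (sub_nonpos.2 (pow_le_pow_left₀ (he a) h j)) (sub_nonpos.2 (pow_le_pow_left₀ (he a) h k))
    · exact mul_nonneg
        (sub_nonneg.2 (pow_le_pow_left₀ (he b) h j)) (sub_nonneg.2 (pow_le_pow_left₀ (he b) h k))
  have expand : ∑ a, ∑ b, (e a ^ j - e b ^ j) * (e a ^ k - e b ^ k) * (c a * c b) =
      (∑ i, e i ^ (j + k) * c i) * (∑ i, e i ^ 0 * c i)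
      - (∑ i, e i ^ j * c i) * (∑ i, e i ^ k * c i)
      - (∑ i, e i ^ k * c i) * (∑ i, e i ^ j * c i)
      + (∑ i, e i ^ 0 * c i) * (∑ i, e i ^ (j + k) * c i) := by
    simp only [Finset.sum_mul_sum, ← Finset.sum_sub_distrib, ← Finset.sum_add_distrib]
    exact Finset.sum_congr rfl fun a _ => Finset.sum_congr rfl fun b _ => by ring
  nlinarith

/-! ### The one-step trace estimate -/

section OneStep

variable {p : ℕ} (K : Matrix (Fin p) (Fin p) ℝ) (w : Fin p → ℝ)

/-- For `K, K - wwᵀ ⪰ 0`, the mixed moments `wᵀ (K - wwᵀ)ⁱ Kˡ w` are at most the pure moments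
`wᵀ Kⁱ⁺ˡ w`, with first-order error: replacing one factor `K - wwᵀ` by `K` costs a product of two
moments of total degree `i + l - 1`, which Chebyshev's inequality bounds. The truncated `i + l - 1`
is harmless since its coefficient `i` vanishes when it truncates. -/
lemma mixed_moment_bounds (hK : Kᵀ = K) (hpos : ∀ x, 0 ≤ x ⬝ᵥ (K *ᵥ x))
    (hpos' : ∀ x, 0 ≤ x ⬝ᵥ ((K - vecMulVec w w) *ᵥ x)) (i l : ℕ) :
    w ⬝ᵥ (((K - vecMulVec w w) ^ i * K ^ l) *ᵥ w) ≤ w ⬝ᵥ ((K ^ (i + l)) *ᵥ w) ∧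
    w ⬝ᵥ ((K ^ (i + l)) *ᵥ w) - i * ((w ⬝ᵥ w) * (w ⬝ᵥ ((K ^ (i + l - 1)) *ᵥ w))) ≤
      w ⬝ᵥ (((K - vecMulVec w w) ^ i * K ^ l) *ᵥ w) := by
  -- both `K` and `K - wwᵀ` are diagonalizable with nonnegative eigenvalues
  have hup : ∀ (A : Matrix (Fin p) (Fin p) ℝ), Aᵀ = A →
      (∀ x, 0 ≤ x ⬝ᵥ (A *ᵥ x)) → ∃ (V : Matrix (Fin p) (Fin p) ℝ) (e : Fin p → ℝ),
        (∀ i, 0 ≤ e i) ∧ ∀ (j : ℕ) (x : Fin p → ℝ),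
        x ⬝ᵥ ((A ^ j) *ᵥ x) = ∑ i, e i ^ j * ((Vᵀ *ᵥ x) i) ^ 2 := by
    intro A hA hA0
    obtain ⟨V, e, h1, h2, h⟩ := exists_spectral A hA
    refine ⟨V, e, fun i => ?_, fun j x => by rw [h, quad_spectral]⟩
    obtain ⟨x, hx1, hx2⟩ := eigenvalue_quad V e h1 i
    have hA1 : A = V * diagonal e * Vᵀ := by simpa using h 1
    rw [← hA1] at hx2
    rw [← hx2]
    exact hA0 x
  have hK' : (K - vecMulVec w w)ᵀ = K - vecMulVec w w := by
    rw [transpose_sub, hK, transpose_vecMulVec]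
  obtain ⟨V, e, he, ha⟩ := hup K hK hpos
  obtain ⟨V', e', he', hb⟩ := hup _ hK' hpos'
  have ha0 : ∀ j, 0 ≤ w ⬝ᵥ ((K ^ j) *ᵥ w) := fun j => by
    rw [ha]
    exact Finset.sum_nonneg fun i _ => mul_nonneg (pow_nonneg (he i) _) (sq_nonneg _)
  have hb0 : ∀ j, 0 ≤ w ⬝ᵥ (((K - vecMulVec w w) ^ j) *ᵥ w) := fun j => by
    rw [hb]
    exact Finset.sum_nonneg fun i _ => mul_nonneg (pow_nonneg (he' i) _) (sq_nonneg _)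
  have hcheb : ∀ j k, (w ⬝ᵥ ((K ^ j) *ᵥ w)) * (w ⬝ᵥ ((K ^ k) *ᵥ w)) ≤
      (w ⬝ᵥ w) * (w ⬝ᵥ ((K ^ (j + k)) *ᵥ w)) := fun j k => by
    have := moment_chebyshev e (fun i => ((Vᵀ *ᵥ w) i) ^ 2) he (fun i => sq_nonneg _) j k
    simp only [← ha] at this
    simpa using this
  have hstep : ∀ i l, w ⬝ᵥ (((K - vecMulVec w w) ^ (i + 1) * K ^ l) *ᵥ w) =
      w ⬝ᵥ (((K - vecMulVec w w) ^ i * K ^ (l + 1)) *ᵥ w) -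
      (w ⬝ᵥ (((K - vecMulVec w w) ^ i) *ᵥ w)) * (w ⬝ᵥ ((K ^ l) *ᵥ w)) := by
    intro i l
    rw [pow_succ, pow_succ' K, Matrix.mul_assoc, Matrix.sub_mul, Matrix.mul_sub, sub_mulVec,
      dotProduct_sub, ← Matrix.mul_assoc _ (vecMulVec w w), Matrix.mul_vecMulVec]
    congr 1
    rw [← mulVec_mulVec, vecMulVec_mulVec]
    simp [mul_comm]
  induction i generalizing l with
  | zero => simp
  | succ i ih =>
    obtain ⟨ih1, ih2⟩ := ih (l + 1)
    rw [hstep]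
    have e1 : i + 1 + l = i + (l + 1) := by omega
    have e2 : i + (l + 1) - 1 = i + l := by omega
    rw [e2] at ih2
    rw [e1, e2]
    have hba : w ⬝ᵥ (((K - vecMulVec w w) ^ i) *ᵥ w) ≤ w ⬝ᵥ ((K ^ i) *ᵥ w) := by
      -- the case `l = 0` of the bound being proved, at `i`
      have := (ih 0).1
      simpa using this
    constructor
    · nlinarith [mul_nonneg (hb0 i) (ha0 l)]
    · have h1 := mul_le_mul_of_nonneg_right hba (ha0 l)
      have h2 := hcheb i l
      push_cast
      nlinarith

/-- Second-order upper bound for the decrease of `tr Kⁿ` under the downdate `K ↦ K - wwᵀ`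
(the case `i = n`, `l = 0`; general `l` is for the induction). Truncated exponents have vanishing
coefficients. -/
lemma trace_downdate (hK : Kᵀ = K) (hpos : ∀ x, 0 ≤ x ⬝ᵥ (K *ᵥ x))
    (hpos' : ∀ x, 0 ≤ x ⬝ᵥ ((K - vecMulVec w w) *ᵥ x)) (i l : ℕ) :
    ((K - vecMulVec w w) ^ i * K ^ l).trace ≤ (K ^ (i + l)).trace
      - i * (w ⬝ᵥ ((K ^ (i + l - 1)) *ᵥ w))
      + (i * (i - 1) / 2 : ℝ) * ((w ⬝ᵥ w) * (w ⬝ᵥ ((K ^ (i + l - 2)) *ᵥ w))) := by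
  have hK' : (K - vecMulVec w w)ᵀ = K - vecMulVec w w := by
    rw [transpose_sub, hK, transpose_vecMulVec]
  induction i generalizing l with
  | zero => simp
  | succ i ih =>
    have hstep : ((K - vecMulVec w w) ^ (i + 1) * K ^ l).trace =
        ((K - vecMulVec w w) ^ i * K ^ (l + 1)).trace -
        w ⬝ᵥ (((K - vecMulVec w w) ^ i * K ^ l) *ᵥ w) := by
      rw [pow_succ, pow_succ' K, Matrix.mul_assoc, Matrix.sub_mul, Matrix.mul_sub, trace_sub,
        ← Matrix.mul_assoc _ (vecMulVec w w), Matrix.mul_vecMulVec, trace_mul_comm,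
        trace_mul_comm _ (K ^ l), Matrix.mul_vecMulVec, trace_vecMulVec]
      congr 1
      -- transposition exchanges the order of the two symmetric factors
      rw [mulVec_mulVec, dotProduct_comm, dotProduct_mulVec, ← mulVec_transpose,
        dotProduct_comm, transpose_mul, transpose_pow, transpose_pow, hK, hK']
    have h1 := ih (l + 1)
    have h2 := (mixed_moment_bounds K w hK hpos hpos' i l).2
    rw [hstep]
    have e1 : i + 1 + l = i + (l + 1) := by omega
    have e2 : i + (l + 1) - 1 = i + l := by omega
    have e3 : i + (l + 1) - 2 = i + l - 1 := by omega
    rw [e1, e2, e3]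
    rw [e2, e3] at h1
    push_cast
    nlinarith

end OneStep

/-! ### Expectations under i.i.d. sampling -/

/-- Conditioning on the first draw. -/
lemma sum_samplingP_succ {n m : ℕ} (π : Fin n → ℝ) (F : (Fin (m + 1) → Fin n) → ℝ) :
    ∑ ω, samplingP π ω * F ω =
      ∑ i, π i * ∑ ω : Fin m → Fin n, samplingP π ω * F (Fin.cons i ω) := by
  rw [← (Fin.consEquiv fun _ : Fin (m + 1) => Fin n).sum_comp, Fintype.sum_prod_type]
  refine Finset.sum_congr rfl fun i _ => ?_
  rw [Finset.mul_sum]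
  refine Finset.sum_congr rfl fun ω _ => ?_
  simp [Fin.consEquiv, samplingP, Fin.prod_univ_succ, mul_assoc]

lemma samplingP_nonneg {n m : ℕ} (π : Fin n → ℝ) (hπ : ∀ i, 0 < π i) (ω : Fin m → Fin n) :
    0 ≤ samplingP π ω := Finset.prod_nonneg fun _ _ => (hπ _).le

lemma sum_samplingP {n : ℕ} (π : Fin n → ℝ) (hsum : ∑ i, π i = 1) (m : ℕ) :
    ∑ ω : Fin m → Fin n, samplingP π ω = 1 := by
  induction m with
  | zero => simp [samplingP]
  | succ m ih =>
    have := sum_samplingP_succ (m := m) π (fun _ => 1)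
    simpa [ih, hsum] using this

lemma expect_sum_centered {n : ℕ} (π : Fin n → ℝ) (hsum : ∑ i, π i = 1) (g : Fin n → ℝ)
    (hg : ∑ i, π i * g i = 0) (m : ℕ) :
    ∑ ω : Fin m → Fin n, samplingP π ω * ∑ s, g (ω s) = 0 := by
  induction m with
  | zero => simp
  | succ m ih =>
    rw [sum_samplingP_succ]
    simp only [Fin.sum_univ_succ, Fin.cons_zero, Fin.cons_succ, mul_add, Finset.sum_add_distrib,
      ih, ← Finset.sum_mul, sum_samplingP π hsum, one_mul, add_zero]
    simpa using hg

/-- Variances of i.i.d. centered summands add up. -/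
lemma expect_sum_sq_centered {n : ℕ} (π : Fin n → ℝ) (hsum : ∑ i, π i = 1) (g : Fin n → ℝ)
    (hg : ∑ i, π i * g i = 0) (m : ℕ) :
    ∑ ω : Fin m → Fin n, samplingP π ω * (∑ s, g (ω s)) ^ 2 = m * ∑ i, π i * g i ^ 2 := by
  induction m with
  | zero => simp
  | succ m ih =>
    rw [sum_samplingP_succ]
    have : ∀ i, ∑ ω : Fin m → Fin n, samplingP π ω *
        (∑ s, g ((Fin.cons i ω : Fin (m + 1) → Fin n) s)) ^ 2 =
        g i ^ 2 + m * ∑ i, π i * g i ^ 2 := by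
      intro i
      have h1 : ∀ ω : Fin m → Fin n, samplingP π ω *
          (∑ s, g ((Fin.cons i ω : Fin (m + 1) → Fin n) s)) ^ 2 =
          g i ^ 2 * samplingP π ω + 2 * g i * (samplingP π ω * ∑ s, g (ω s)) +
            samplingP π ω * (∑ s, g (ω s)) ^ 2 := by
        intro ω
        simp only [Fin.sum_univ_succ, Fin.cons_zero, Fin.cons_succ]
        ring
      simp only [h1, Finset.sum_add_distrib, ← Finset.mul_sum, ih, sum_samplingP π hsum,
        expect_sum_centered π hsum g hg]
      ring
    simp only [this, mul_add, Finset.sum_add_distrib, ← Finset.sum_mul, hsum]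
    push_cast
    ring

/-! ### The matrix Chernoff lower tail -/

lemma quad_rankOne {p : ℕ} (w x : Fin p → ℝ) :
    x ⬝ᵥ (vecMulVec w w *ᵥ x) = (w ⬝ᵥ x) ^ 2 := by
  rw [vecMulVec_mulVec]
  simp [dotProduct_comm x w, sq]

lemma dotProduct_sq_le {p : ℕ} (w x : Fin p → ℝ) :
    (w ⬝ᵥ x) ^ 2 ≤ (w ⬝ᵥ w) * (x ⬝ᵥ x) := by
  have := Finset.sum_mul_sq_le_sq_mul_sq Finset.univ w x
  simpa [dotProduct, sq] using this

lemma dotProduct_self_nonneg' {p : ℕ} (x : Fin p → ℝ) : 0 ≤ x ⬝ᵥ x :=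
  Finset.sum_nonneg fun i _ => mul_self_nonneg (x i)

section Chernoff

variable {n p : ℕ} (π : Fin n → ℝ) (w : Fin n → Fin p → ℝ)

/-- For isotropic `w`, one random downdate `K ↦ K - w wᵀ` shrinks the expectation of `tr K^q` by
an explicit factor. -/
lemma trace_step (hπ : ∀ i, 0 < π i) (hsum : ∑ i, π i = 1) (R κ c : ℝ)
    (hiso : ∑ i, π i • vecMulVec (w i) (w i) = 1) (hR : ∀ i, w i ⬝ᵥ w i ≤ R) (hR0 : 0 ≤ R)
    (hκ : 0 < κ) (hc : 0 < c) (K : Matrix (Fin p) (Fin p) ℝ) (hK : Kᵀ = K)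
    (hlo : ∀ x, (κ + R) * (x ⬝ᵥ x) ≤ x ⬝ᵥ (K *ᵥ x))
    (hhi : ∀ x, x ⬝ᵥ (K *ᵥ x) ≤ c * (x ⬝ᵥ x)) (k : ℕ) :
    ∑ i, π i * ((K - vecMulVec (w i) (w i)) ^ (k + 2)).trace ≤
      (1 - (k + 2) / c + (k + 2) * (k + 1) / 2 * (R / κ ^ 2)) * (K ^ (k + 2)).trace := by
  obtain ⟨V, e, hV, hbd, htr, hq⟩ := exists_spectral_bounds K hK _ _ hlo hhi
  have he : ∀ i, κ ≤ e i := fun i => by linarith [(hbd i).1]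
  have he0 : ∀ i, 0 ≤ e i := fun i => hκ.le.trans (he i)
  have hKpos : ∀ x, 0 ≤ x ⬝ᵥ (K *ᵥ x) := fun x =>
    (mul_nonneg (by linarith) (dotProduct_self_nonneg' x)).trans (hlo x)
  have hKpos' : ∀ i x, 0 ≤ x ⬝ᵥ ((K - vecMulVec (w i) (w i)) *ᵥ x) := fun i x => by
    rw [sub_mulVec, dotProduct_sub, quad_rankOne]
    have h1 := hlo x
    have h2 := dotProduct_sq_le (w i) x
    have h3 := mul_le_mul_of_nonneg_right (hR i) (dotProduct_self_nonneg' x)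
    have h4 := mul_nonneg hκ.le (dotProduct_self_nonneg' x)
    linarith
  have hmom : ∀ j, ∑ i, π i * (w i ⬝ᵥ ((K ^ j) *ᵥ w i)) = (K ^ j).trace := by
    intro j
    have h1 : ∀ i, w i ⬝ᵥ ((K ^ j) *ᵥ w i) = (K ^ j * vecMulVec (w i) (w i)).trace := fun i => by
      rw [Matrix.mul_vecMulVec, trace_vecMulVec, dotProduct_comm]
    calc ∑ i, π i * (w i ⬝ᵥ ((K ^ j) *ᵥ w i))
        = (K ^ j * ∑ i, π i • vecMulVec (w i) (w i)).trace := by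
          rw [Finset.mul_sum, trace_sum]
          refine Finset.sum_congr rfl fun i _ => ?_
          rw [h1, Matrix.mul_smul, trace_smul, smul_eq_mul]
      _ = _ := by rw [hiso, Matrix.mul_one]
  have ha0 : ∀ i j, 0 ≤ w i ⬝ᵥ ((K ^ j) *ᵥ w i) := fun i j => by
    rw [hq]
    exact Finset.sum_nonneg fun i _ => mul_nonneg (pow_nonneg (he0 i) _) (sq_nonneg _)
  have hone : ∀ i, ((K - vecMulVec (w i) (w i)) ^ (k + 2)).trace ≤ (K ^ (k + 2)).trace
      - (k + 2) * (w i ⬝ᵥ ((K ^ (k + 1)) *ᵥ w i))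
      + ((k + 2) * (k + 1) / 2 : ℝ) * (R * (w i ⬝ᵥ ((K ^ k) *ᵥ w i))) := by
    intro i
    have h := trace_downdate K (w i) hK hKpos (hKpos' i) (k + 2) 0
    rw [pow_zero, Matrix.mul_one] at h
    simp only [add_zero, Nat.add_sub_cancel] at h
    have e1 : k + 2 - 1 = k + 1 := by omega
    rw [e1] at h
    push_cast at h
    have h3 : ((k + 2) * (k + 1) / 2 : ℝ) * ((w i ⬝ᵥ w i) * (w i ⬝ᵥ ((K ^ k) *ᵥ w i))) ≤
        ((k + 2) * (k + 1) / 2 : ℝ) * (R * (w i ⬝ᵥ ((K ^ k) *ᵥ w i))) := by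
      have := mul_le_mul_of_nonneg_right (hR i) (ha0 i k)
      gcongr
    have h4 : ((k : ℝ) + 2 - 1) = k + 1 := by ring
    rw [h4] at h
    linarith
  have hpi : ∑ i, π i * (K ^ (k + 2)).trace ≤ (K ^ (k + 2)).trace := by
    rw [← Finset.sum_mul, hsum, one_mul]
  have hsumle : ∑ i, π i * ((K - vecMulVec (w i) (w i)) ^ (k + 2)).trace ≤
      (K ^ (k + 2)).trace - (k + 2) * (K ^ (k + 1)).trace
        + ((k + 2) * (k + 1) / 2 : ℝ) * (R * (K ^ k).trace) := by
    calc _ ≤ ∑ i, π i * ((K ^ (k + 2)).trace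
      - (k + 2) * (w i ⬝ᵥ ((K ^ (k + 1)) *ᵥ w i))
      + ((k + 2) * (k + 1) / 2 : ℝ) * (R * (w i ⬝ᵥ ((K ^ k) *ᵥ w i)))) :=
          Finset.sum_le_sum fun i _ => mul_le_mul_of_nonneg_left (hone i) (hπ i).le
      _ = ∑ i, π i * (K ^ (k + 2)).trace
          - (k + 2) * ∑ i, π i * (w i ⬝ᵥ ((K ^ (k + 1)) *ᵥ w i))
          + ((k + 2) * (k + 1) / 2 : ℝ) * (R * ∑ i, π i * (w i ⬝ᵥ ((K ^ k) *ᵥ w i))) := by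
          simp only [Finset.mul_sum, ← Finset.sum_sub_distrib, ← Finset.sum_add_distrib]
          exact Finset.sum_congr rfl fun i _ => by ring
      _ ≤ _ := by rw [hmom, hmom]; linarith
  have hup : (K ^ (k + 2)).trace / c ≤ (K ^ (k + 1)).trace := by
    rw [div_le_iff₀ hc, htr, htr, Finset.sum_mul]
    refine Finset.sum_le_sum fun i _ => ?_
    rw [pow_succ]
    exact mul_le_mul_of_nonneg_left (hbd i).2 (pow_nonneg (he0 i) _)
  have hdown : (K ^ k).trace ≤ (K ^ (k + 2)).trace / κ ^ 2 := by
    rw [le_div_iff₀ (by positivity), htr, htr, Finset.sum_mul]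
    refine Finset.sum_le_sum fun i _ => ?_
    rw [pow_add]
    exact mul_le_mul_of_nonneg_left (pow_le_pow_left₀ hκ.le (he i) 2) (pow_nonneg (he0 i) _)
  calc _ ≤ _ := hsumle
    _ ≤ (K ^ (k + 2)).trace - (k + 2) * ((K ^ (k + 2)).trace / c)
        + ((k + 2) * (k + 1) / 2 : ℝ) * (R * ((K ^ (k + 2)).trace / κ ^ 2)) := by gcongr
    _ = _ := by ring

/-- The expectation of `tr (K - ∑ w wᵀ)^q` after `m` random downdates. -/
lemma trace_iterate (hπ : ∀ i, 0 < π i) (hsum : ∑ i, π i = 1) (R κ c : ℝ)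
    (hiso : ∑ i, π i • vecMulVec (w i) (w i) = 1) (hR : ∀ i, w i ⬝ᵥ w i ≤ R) (hR0 : 0 ≤ R)
    (hκ : 0 < κ) (hc : 0 < c) (k m : ℕ)
    (hρ : 0 ≤ 1 - (k + 2) / c + (k + 2) * (k + 1) / 2 * (R / κ ^ 2))
    (K : Matrix (Fin p) (Fin p) ℝ) (hK : Kᵀ = K)
    (hlo : ∀ x, (κ + m * R) * (x ⬝ᵥ x) ≤ x ⬝ᵥ (K *ᵥ x))
    (hhi : ∀ x, x ⬝ᵥ (K *ᵥ x) ≤ c * (x ⬝ᵥ x)) :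
    ∑ ω : Fin m → Fin n, samplingP π ω *
        ((K - ∑ s, vecMulVec (w (ω s)) (w (ω s))) ^ (k + 2)).trace ≤
      (1 - (k + 2) / c + (k + 2) * (k + 1) / 2 * (R / κ ^ 2)) ^ m * (K ^ (k + 2)).trace := by
  induction m generalizing K with
  | zero => simp [samplingP]
  | succ m ih =>
    rw [sum_samplingP_succ]
    have hmR : 0 ≤ m * R := by positivity
    have h1 : ∀ i, ∑ ω : Fin m → Fin n, samplingP π ω *
        ((K - ∑ s, vecMulVec (w ((Fin.cons i ω : Fin (m + 1) → Fin n) s))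
          (w ((Fin.cons i ω : Fin (m + 1) → Fin n) s))) ^ (k + 2)).trace ≤
        (1 - (k + 2) / c + (k + 2) * (k + 1) / 2 * (R / κ ^ 2)) ^ m *
          ((K - vecMulVec (w i) (w i)) ^ (k + 2)).trace := by
      intro i
      simp only [Fin.sum_univ_succ, Fin.cons_zero, Fin.cons_succ, ← sub_sub]
      refine ih _ ?_ ?_ ?_
      · rw [transpose_sub, hK, transpose_vecMulVec]
      · intro x
        rw [sub_mulVec, dotProduct_sub, quad_rankOne]
        have h1 := hlo x
        have h2 := dotProduct_sq_le (w i) x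
        have h3 := mul_le_mul_of_nonneg_right (hR i) (dotProduct_self_nonneg' x)
        push_cast at h1
        linarith
      · intro x
        rw [sub_mulVec, dotProduct_sub, quad_rankOne]
        have h1 := hhi x
        have h2 := sq_nonneg (w i ⬝ᵥ x)
        linarith
    calc _ ≤ ∑ i, π i * ((1 - (k + 2) / c + (k + 2) * (k + 1) / 2 * (R / κ ^ 2)) ^ m *
          ((K - vecMulVec (w i) (w i)) ^ (k + 2)).trace) :=
          Finset.sum_le_sum fun i _ => mul_le_mul_of_nonneg_left (h1 i) (hπ i).le
      _ = (1 - (k + 2) / c + (k + 2) * (k + 1) / 2 * (R / κ ^ 2)) ^ m *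
          ∑ i, π i * ((K - vecMulVec (w i) (w i)) ^ (k + 2)).trace := by
          rw [Finset.mul_sum]
          exact Finset.sum_congr rfl fun i _ => by ring
      _ ≤ (1 - (k + 2) / c + (k + 2) * (k + 1) / 2 * (R / κ ^ 2)) ^ m *
          ((1 - (k + 2) / c + (k + 2) * (k + 1) / 2 * (R / κ ^ 2)) * (K ^ (k + 2)).trace) := by
          refine mul_le_mul_of_nonneg_left (trace_step π w hπ hsum R κ c hiso hR hR0 hκ hc K hK
            (fun x => ?_) hhi k) (pow_nonneg hρ m)
          have h1 := hlo x
          have h2 := mul_nonneg hmR (dotProduct_self_nonneg' x)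
          push_cast at h1
          linarith
      _ = _ := by ring

lemma quad_sum_rankOne {m : ℕ} (u : Fin m → Fin p → ℝ) (x : Fin p → ℝ) :
    x ⬝ᵥ ((∑ s, vecMulVec (u s) (u s)) *ᵥ x) = ∑ s, (u s ⬝ᵥ x) ^ 2 := by
  rw [sum_mulVec, dotProduct_sum]
  exact Finset.sum_congr rfl fun s _ => quad_rankOne _ _

lemma quad_scalar_sub (c : ℝ) (A : Matrix (Fin p) (Fin p) ℝ) (x : Fin p → ℝ) :
    x ⬝ᵥ ((c • (1 : Matrix (Fin p) (Fin p) ℝ) - A) *ᵥ x) = c * (x ⬝ᵥ x) - x ⬝ᵥ (A *ᵥ x) := by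
  rw [sub_mulVec, smul_mulVec, one_mulVec, dotProduct_sub, dotProduct_smul, smul_eq_mul]

/-- The Markov step for the potential `tr (c - ∑ w wᵀ)^q` with `c = q/t + mR`, `q = k + 2`. -/
lemma chernoff_finite (hπ : ∀ i, 0 < π i) (hsum : ∑ i, π i = 1) (R t μ : ℝ)
    (hiso : ∑ i, π i • vecMulVec (w i) (w i) = 1) (hR : ∀ i, w i ⬝ᵥ w i ≤ R) (hR0 : 0 ≤ R)
    (ht : 0 < t) (ht1 : t ≤ 1) (hμ : 0 ≤ μ) (m k : ℕ) (hk : μ * t ≤ k + 2)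
    (bad : Finset (Fin m → Fin n))
    (hbad : ∀ ω ∈ bad, ∃ x : Fin p → ℝ, ∑ s, (w (ω s) ⬝ᵥ x) ^ 2 < μ * (x ⬝ᵥ x)) :
    eventProb (samplingP π) bad * (1 + -(μ * t) / ((k + 2 : ℕ) : ℝ)) ^ (k + 2) ≤
      p * (1 - t + R * t ^ 2 / 2 + t ^ 2 * m * R / ((k + 2 : ℕ) : ℝ)) ^ m := by
  push_cast
  have hq : (0 : ℝ) < k + 2 := by positivity
  obtain ⟨κ, hκdef⟩ : ∃ κ : ℝ, κ = (k + 2) / t := ⟨_, rfl⟩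
  obtain ⟨c, hcdef⟩ : ∃ c : ℝ, c = κ + m * R := ⟨_, rfl⟩
  have hκ : 0 < κ := by rw [hκdef]; positivity
  have hmR : 0 ≤ m * R := by positivity
  have hc : 0 < c := by linarith
  have hκt : κ * t = k + 2 := by rw [hκdef]; field_simp
  have hμκ : μ ≤ κ := by rw [hκdef, le_div_iff₀ ht]; exact hk
  have hqc : (k + 2) / c ≤ t := by
    rw [div_le_iff₀ hc, hcdef]
    nlinarith [mul_nonneg ht.le hmR]
  have hqc' : t - t ^ 2 * m * R / (k + 2) ≤ (k + 2) / c := by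
    rw [le_div_iff₀ hc, sub_mul, div_mul_eq_mul_div, sub_le_iff_le_add, ← sub_le_iff_le_add',
      le_div_iff₀ hq, hcdef, ← hκt]
    nlinarith [mul_nonneg (mul_nonneg ht.le ht.le) (mul_nonneg hmR hmR)]
  have hrem : (k + 2) * (k + 1) / 2 * (R / κ ^ 2) ≤ R * t ^ 2 / 2 := by
    have : (k + 2) * (k + 1) / 2 * (R / κ ^ 2) = (R * t ^ 2 / 2) * ((k + 1) / (k + 2)) := by
      rw [hκdef]; field_simp
    rw [this]
    refine mul_le_of_le_one_right (by positivity) ?_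
    rw [div_le_one hq]; linarith
  have hrem0 : 0 ≤ (k + 2) * (k + 1) / 2 * (R / κ ^ 2) := by positivity
  have hρ : 0 ≤ 1 - (k + 2) / c + (k + 2) * (k + 1) / 2 * (R / κ ^ 2) := by linarith
  have hA : ∀ (ω : Fin m → Fin n) (x : Fin p → ℝ),
      ∑ s, (w (ω s) ⬝ᵥ x) ^ 2 ≤ m * R * (x ⬝ᵥ x) := by
    intro ω x
    calc ∑ s, (w (ω s) ⬝ᵥ x) ^ 2 ≤ ∑ _s : Fin m, R * (x ⬝ᵥ x) :=
          Finset.sum_le_sum fun s _ => (dotProduct_sq_le _ _).trans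
            (mul_le_mul_of_nonneg_right (hR _) (dotProduct_self_nonneg' x))
      _ = _ := by simp [mul_assoc]
  have hspec : ∀ ω : Fin m → Fin n, ∃ (V : Matrix (Fin p) (Fin p) ℝ) (e : Fin p → ℝ),
      V * Vᵀ = 1 ∧ (∀ i, κ ≤ e i) ∧
      ((c • (1 : Matrix (Fin p) (Fin p) ℝ) -
        ∑ s, vecMulVec (w (ω s)) (w (ω s))) ^ (k + 2)).trace = ∑ i, e i ^ (k + 2) ∧
      ∀ x : Fin p → ℝ, c * (x ⬝ᵥ x) - ∑ s, (w (ω s) ⬝ᵥ x) ^ 2 =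
        ∑ i, e i * ((Vᵀ *ᵥ x) i) ^ 2 := by
    intro ω
    obtain ⟨V, e, hV, hb, htr, hqd⟩ := exists_spectral_bounds
      (c • (1 : Matrix (Fin p) (Fin p) ℝ) - ∑ s, vecMulVec (w (ω s)) (w (ω s)))
      (by simp [transpose_sub, transpose_sum]) κ c
      (fun x => by
        rw [quad_scalar_sub, quad_sum_rankOne]
        have := hA ω x
        rw [hcdef]; linarith)
      (fun x => by
        rw [quad_scalar_sub, quad_sum_rankOne]
        have : 0 ≤ ∑ s, (w (ω s) ⬝ᵥ x) ^ 2 := Finset.sum_nonneg fun _ _ => sq_nonneg _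
        linarith)
    refine ⟨V, e, hV, fun i => (hb i).1, htr _, fun x => ?_⟩
    have := hqd 1 x
    rw [pow_one, quad_scalar_sub, quad_sum_rankOne] at this
    simpa using this
  have hcμ : 0 ≤ c - μ := by linarith
  have hlow : eventProb (samplingP π) bad * (c - μ) ^ (k + 2) ≤
      ∑ ω : Fin m → Fin n, samplingP π ω * ((c • (1 : Matrix (Fin p) (Fin p) ℝ) -
        ∑ s, vecMulVec (w (ω s)) (w (ω s))) ^ (k + 2)).trace := by
    rw [eventProb, Finset.sum_mul]
    refine (Finset.sum_le_sum fun ω hω => ?_).trans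
      (Finset.sum_le_sum_of_subset_of_nonneg (Finset.subset_univ bad) fun ω _ _ => ?_)
    · refine mul_le_mul_of_nonneg_left ?_ (samplingP_nonneg π hπ ω)
      obtain ⟨V, e, hV, hb, htr, hqd⟩ := hspec ω
      obtain ⟨x, hx⟩ := hbad ω hω
      rw [htr]
      obtain ⟨i, hi⟩ : ∃ i, c - μ ≤ e i := by
        by_contra! hcon
        have h1 := hqd x
        have h2 : ∑ i, e i * ((Vᵀ *ᵥ x) i) ^ 2 ≤ ∑ i, (c - μ) * ((Vᵀ *ᵥ x) i) ^ 2 :=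
          Finset.sum_le_sum fun i _ => mul_le_mul_of_nonneg_right (hcon i).le (sq_nonneg _)
        rw [← Finset.mul_sum, norm_spectral V x hV] at h2
        linarith
      calc (c - μ) ^ (k + 2) ≤ e i ^ (k + 2) := pow_le_pow_left₀ hcμ hi _
        _ ≤ _ := Finset.single_le_sum (f := fun i => e i ^ (k + 2))
          (fun j _ => pow_nonneg (hκ.le.trans (hb j)) _) (Finset.mem_univ i)
    · obtain ⟨V, e, hV, hb, htr, hqd⟩ := hspec ω
      rw [htr]
      exact mul_nonneg (samplingP_nonneg π hπ ω)
        (Finset.sum_nonneg fun j _ => pow_nonneg (hκ.le.trans (hb j)) _)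
  have hup := trace_iterate π w hπ hsum R κ c hiso hR hR0 hκ hc k m hρ
    (c • (1 : Matrix (Fin p) (Fin p) ℝ)) (by simp)
    (fun x => by rw [smul_mulVec, one_mulVec, dotProduct_smul, smul_eq_mul, hcdef])
    (fun x => by rw [smul_mulVec, one_mulVec, dotProduct_smul, smul_eq_mul])
  have htrc : ((c • (1 : Matrix (Fin p) (Fin p) ℝ)) ^ (k + 2)).trace = p * c ^ (k + 2) := by
    rw [smul_pow, one_pow, trace_smul, trace_one, Fintype.card_fin, smul_eq_mul, mul_comm]
  rw [htrc] at hup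
  have hP0 : 0 ≤ eventProb (samplingP π) bad :=
    Finset.sum_nonneg fun ω _ => samplingP_nonneg π hπ ω
  have hbase : (1 + -(μ * t) / (k + 2 : ℝ)) ≤ (c - μ) / c := by
    have h1 : μ * t / (k + 2 : ℝ) = μ / κ := by rw [hκdef]; field_simp
    have h2 : μ / c ≤ μ / κ := div_le_div_of_nonneg_left hμ hκ (by linarith)
    rw [neg_div, h1, sub_div, div_self hc.ne']
    linarith
  have hbase0 : 0 ≤ (1 + -(μ * t) / (k + 2 : ℝ)) := by
    rw [neg_div]
    have := (div_le_one hq).2 hk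
    linarith
  calc eventProb (samplingP π) bad * (1 + -(μ * t) / (k + 2 : ℝ)) ^ (k + 2)
      ≤ eventProb (samplingP π) bad * ((c - μ) / c) ^ (k + 2) := by gcongr
    _ = (eventProb (samplingP π) bad * (c - μ) ^ (k + 2)) / c ^ (k + 2) := by
        rw [div_pow, mul_div_assoc]
    _ ≤ ((1 - (k + 2) / c + (k + 2) * (k + 1) / 2 * (R / κ ^ 2)) ^ m * (p * c ^ (k + 2))) /
          c ^ (k + 2) := by
        exact div_le_div_of_nonneg_right (hlow.trans hup) (by positivity)
    _ = p * (1 - (k + 2) / c + (k + 2) * (k + 1) / 2 * (R / κ ^ 2)) ^ m := by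
        field_simp
    _ ≤ _ := mul_le_mul_of_nonneg_left (pow_le_pow_left₀ hρ (by linarith) m) (Nat.cast_nonneg p)

open Filter Topology in
/-- Matrix Chernoff lower tail: letting `q → ∞` turns the polynomial potential into the exponential
one, and the failure probability is at most `p · exp (μ t - m t + m R t² / 2)`. -/
lemma matrix_chernoff (hπ : ∀ i, 0 < π i) (hsum : ∑ i, π i = 1) (R t μ : ℝ)
    (hiso : ∑ i, π i • vecMulVec (w i) (w i) = 1) (hR : ∀ i, w i ⬝ᵥ w i ≤ R) (hR0 : 0 ≤ R)
    (ht : 0 < t) (ht1 : t ≤ 1) (hμ : 0 ≤ μ) (m : ℕ)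
    (bad : Finset (Fin m → Fin n))
    (hbad : ∀ ω ∈ bad, ∃ x : Fin p → ℝ, ∑ s, (w (ω s) ⬝ᵥ x) ^ 2 < μ * (x ⬝ᵥ x)) :
    eventProb (samplingP π) bad ≤ p * Real.exp (μ * t - m * t + m * (R * t ^ 2 / 2)) := by
  have hl : Tendsto (fun q : ℕ => eventProb (samplingP π) bad * (1 + -(μ * t) / (q : ℝ)) ^ q) atTop
      (𝓝 (eventProb (samplingP π) bad * Real.exp (-(μ * t)))) :=
    (Real.tendsto_one_add_div_pow_exp (-(μ * t))).const_mul _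
  have hr : Tendsto (fun q : ℕ => p * (1 - t + R * t ^ 2 / 2 + t ^ 2 * m * R / (q : ℝ)) ^ m) atTop
      (𝓝 (p * (1 - t + R * t ^ 2 / 2 + 0) ^ m)) :=
    ((tendsto_const_nhds.add (tendsto_const_div_atTop_nhds_zero_nat _)).pow m).const_mul _
  have hlim : eventProb (samplingP π) bad * Real.exp (-(μ * t)) ≤
      p * (1 - t + R * t ^ 2 / 2 + 0) ^ m := by
    refine le_of_tendsto_of_tendsto hl hr ?_
    filter_upwards [eventually_ge_atTop 2, eventually_ge_atTop ⌈μ * t⌉₊] with q h2 h3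
    obtain ⟨k, rfl⟩ : ∃ k, q = k + 2 := ⟨q - 2, by omega⟩
    refine chernoff_finite π w hπ hsum R t μ hiso hR hR0 ht ht1 hμ m k ?_ bad hbad
    have := Nat.ceil_le.1 h3
    push_cast at this
    exact this
  have hexp : (1 - t + R * t ^ 2 / 2 + 0) ^ m ≤ Real.exp (m * (-t + R * t ^ 2 / 2)) := by
    rw [Real.exp_nat_mul]
    refine pow_le_pow_left₀ ?_ ?_ m
    · have : 0 ≤ R * t ^ 2 / 2 := by positivity
      linarith
    · have := Real.add_one_le_exp (-t + R * t ^ 2 / 2)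
      linarith
  have h := hlim.trans (mul_le_mul_of_nonneg_left hexp (Nat.cast_nonneg p))
  calc eventProb (samplingP π) bad
      = eventProb (samplingP π) bad * Real.exp (-(μ * t)) * Real.exp (μ * t) := by
        rw [mul_assoc, ← Real.exp_add]; simp
    _ ≤ p * Real.exp (m * (-t + R * t ^ 2 / 2)) * Real.exp (μ * t) := by gcongr
    _ = _ := by rw [mul_assoc, ← Real.exp_add]; congr 2; ring

end Chernoff

/-! ### Reduction of the sketched problem to an orthonormal design -/

/-- A positive definite Gram matrix can be whitened. -/
lemma exists_whitening {n p : ℕ} (X : Matrix (Fin n) (Fin p) ℝ) (hX : IsUnit (Xᵀ * X).det) :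
    ∃ T : Matrix (Fin p) (Fin p) ℝ, (X * T)ᵀ * (X * T) = 1 ∧ T * Tᵀ = (Xᵀ * X)⁻¹ ∧
      IsUnit T.det := by
  obtain ⟨V, e, h1, h2, h⟩ := exists_spectral (Xᵀ * X) (by simp)
  have hG : Xᵀ * X = V * diagonal e * Vᵀ := by simpa using h 1
  have he0 : ∀ i, 0 < e i := by
    intro i
    obtain ⟨x, -, hx2⟩ := eigenvalue_quad V e h1 i
    rw [← hG, ← mulVec_mulVec, dotProduct_mulVec, vecMul_transpose] at hx2
    have hnn : 0 ≤ e i := hx2 ▸ dotProduct_self_nonneg' _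
    refine lt_of_le_of_ne hnn fun h0 => ?_
    have hdet : (Xᵀ * X).det = 0 := by
      rw [hG, det_mul, det_mul, det_diagonal, Finset.prod_eq_zero (Finset.mem_univ i) h0.symm]
      simp
    rw [hdet] at hX
    exact not_isUnit_zero hX
  have hD : diagonal (fun i => 1 / Real.sqrt (e i)) *
      (diagonal e * diagonal (fun i => 1 / Real.sqrt (e i))) = 1 := by
    rw [diagonal_mul_diagonal, diagonal_mul_diagonal, ← diagonal_one]
    congr 1
    funext i
    have := Real.mul_self_sqrt (he0 i).le
    have h3 : Real.sqrt (e i) ≠ 0 := (Real.sqrt_pos.2 (he0 i)).ne'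
    field_simp
    nlinarith
  have hT : (V * diagonal (fun i => 1 / Real.sqrt (e i)))ᵀ *
      ((Xᵀ * X) * (V * diagonal (fun i => 1 / Real.sqrt (e i)))) = 1 := by
    rw [hG, transpose_mul, diagonal_transpose]
    calc _ = diagonal (fun i => 1 / Real.sqrt (e i)) * ((Vᵀ * V) * (diagonal e * ((Vᵀ * V) *
          diagonal (fun i => 1 / Real.sqrt (e i))))) := by simp only [Matrix.mul_assoc]
      _ = 1 := by rw [h1, Matrix.one_mul, Matrix.one_mul, hD]
  refine ⟨V * diagonal (fun i => 1 / Real.sqrt (e i)), ?_, ?_, ?_⟩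
  · rw [transpose_mul, ← hT]
    simp only [Matrix.mul_assoc]
  · refine (inv_eq_right_inv ?_).symm
    rw [← Matrix.mul_assoc]
    exact mul_eq_one_comm.mp hT
  · rw [← Matrix.mul_assoc] at hT
    exact isUnit_det_of_left_inverse hT

lemma lev_eq_of_whitening {n p : ℕ} (X : Matrix (Fin n) (Fin p) ℝ) (T : Matrix (Fin p) (Fin p) ℝ)
    (hT : T * Tᵀ = (Xᵀ * X)⁻¹) (i : Fin n) : lev X i = (X * T) i ⬝ᵥ (X * T) i := by
  have h : (X * T) i = Tᵀ *ᵥ X i := by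
    rw [mulVec_transpose]; rfl
  rw [lev, ← hT, ← mulVec_mulVec, dotProduct_mulVec, ← mulVec_transpose, h]

lemma sketch_apply {n m : ℕ} (π : Fin n → ℝ) (ω : Fin m → Fin n) (a : Fin n → ℝ) (s : Fin m) :
    (samplingS π ω *ᵥ a) s = 1 / Real.sqrt (m * π (ω s)) * a (ω s) := by
  simp [samplingS, mulVec, dotProduct]

lemma sketch_dot {n m : ℕ} (π : Fin n → ℝ) (hπ : ∀ i, 0 < π i) (ω : Fin m → Fin n)
    (a b : Fin n → ℝ) :
    (samplingS π ω *ᵥ a) ⬝ᵥ (samplingS π ω *ᵥ b) =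
      (m : ℝ)⁻¹ * ∑ s, a (ω s) * b (ω s) / π (ω s) := by
  simp only [dotProduct, sketch_apply, Finset.mul_sum]
  refine Finset.sum_congr rfl fun s _ => ?_
  have h := Real.mul_self_sqrt (mul_nonneg (Nat.cast_nonneg (α := ℝ) m) (hπ (ω s)).le)
  calc _ = (1 / (Real.sqrt (m * π (ω s)) * Real.sqrt (m * π (ω s)))) * (a (ω s) * b (ω s)) := by
        ring
    _ = _ := by rw [h, one_div, mul_inv]; ring

/-- If the sketch preserves the column space of `X` up to the factor `γ`, the sketched Gram matrix
is invertible and the excess loss is at most `γ⁻²` times the squared norm of the projected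
sketched noise `Uᵀ Sᵀ S r`, where `U = X T` is orthonormal. -/
lemma good_event {n p m : ℕ} (X : Matrix (Fin n) (Fin p) ℝ) (y : Fin n → ℝ) (π : Fin n → ℝ)
    (hπ : ∀ i, 0 < π i) (hX : IsUnit (Xᵀ * X).det) (T : Matrix (Fin p) (Fin p) ℝ)
    (hU : (X * T)ᵀ * (X * T) = 1) (hT : IsUnit T.det) (ω : Fin m → Fin n) (γ : ℝ) (hγ : 0 < γ)
    (hgood : ∀ x, γ * (x ⬝ᵥ x) ≤
      (samplingS π ω *ᵥ ((X * T) *ᵥ x)) ⬝ᵥ (samplingS π ω *ᵥ ((X * T) *ᵥ x))) :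
    IsUnit ((samplingS π ω * X)ᵀ * (samplingS π ω * X)).det ∧
    γ ^ 2 * (lossL X y (betaTilde X y π ω) - lossL X y (olsSol X y)) ≤
      ∑ k, ((m : ℝ)⁻¹ * ∑ s, (X * T) (ω s) k * olsResid X y (ω s) / π (ω s)) ^ 2 := by
  have hTT : T * T⁻¹ = 1 := mul_nonsing_inv T hT
  have hXT : ∀ z, X *ᵥ z = (X * T) *ᵥ (T⁻¹ *ᵥ z) := fun z => by
    rw [mulVec_mulVec, Matrix.mul_assoc, hTT, Matrix.mul_one]
  have hunit : IsUnit ((samplingS π ω * X)ᵀ * (samplingS π ω * X)).det := by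
    rw [← isUnit_iff_isUnit_det, ← mulVec_injective_iff_isUnit]
    intro z₁ z₂ hz
    have h0 : ((samplingS π ω * X)ᵀ * (samplingS π ω * X)) *ᵥ (z₁ - z₂) = 0 := by
      rw [mulVec_sub]; exact sub_eq_zero.2 hz
    have h1 : (samplingS π ω *ᵥ (X *ᵥ (z₁ - z₂))) ⬝ᵥ (samplingS π ω *ᵥ (X *ᵥ (z₁ - z₂))) = 0 := by
      rw [mulVec_mulVec, dotProduct_mulVec, ← mulVec_transpose, mulVec_mulVec, h0,
        zero_dotProduct]
    have h2 := hgood (T⁻¹ *ᵥ (z₁ - z₂))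
    rw [← hXT, h1] at h2
    have h3 : (T⁻¹ *ᵥ (z₁ - z₂)) ⬝ᵥ (T⁻¹ *ᵥ (z₁ - z₂)) = 0 :=
      le_antisymm (nonpos_of_mul_nonpos_right h2 hγ) (dotProduct_self_nonneg' _)
    rw [dotProduct_self_eq_zero] at h3
    have h4 : z₁ - z₂ = T *ᵥ (T⁻¹ *ᵥ (z₁ - z₂)) := by rw [mulVec_mulVec, hTT, one_mulVec]
    rw [h3, mulVec_zero] at h4
    exact sub_eq_zero.1 h4
  refine ⟨hunit, ?_⟩
  have hnormal : Xᵀ *ᵥ olsResid X y = 0 := by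
    rw [olsResid, olsSol, mulVec_sub, mulVec_mulVec, mulVec_mulVec, mul_nonsing_inv _ hX,
      one_mulVec, sub_self]
  have hnormalU : ∀ d, olsResid X y ⬝ᵥ ((X * T) *ᵥ d) = 0 := fun d => by
    rw [dotProduct_mulVec, ← mulVec_transpose, transpose_mul, ← mulVec_mulVec, hnormal]
    simp
  obtain ⟨d, hd⟩ : ∃ d, d = T⁻¹ *ᵥ (betaTilde X y π ω - olsSol X y) := ⟨_, rfl⟩
  have hXd : X *ᵥ (betaTilde X y π ω - olsSol X y) = (X * T) *ᵥ d := by rw [hXT, hd]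
  have hloss : lossL X y (betaTilde X y π ω) - lossL X y (olsSol X y) = d ⬝ᵥ d := by
    have h1 : y - X *ᵥ betaTilde X y π ω = olsResid X y - (X * T) *ᵥ d := by
      rw [← hXd, mulVec_sub, olsResid]; abel
    have h2 : ((X * T) *ᵥ d) ⬝ᵥ ((X * T) *ᵥ d) = d ⬝ᵥ d := by
      rw [dotProduct_mulVec, ← mulVec_transpose, mulVec_mulVec, hU, one_mulVec]
    have h3 := hnormalU d
    have h4 : ((X * T) *ᵥ d) ⬝ᵥ olsResid X y = 0 := by rw [dotProduct_comm, h3]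
    rw [lossL, lossL, h1, sub_dotProduct, dotProduct_sub, dotProduct_sub, h2, h3, h4, olsResid]
    ring
  -- the normal equations of the sketched problem, tested against `β̃ - β_OLS`
  have hsk : (samplingS π ω *ᵥ ((X * T) *ᵥ d)) ⬝ᵥ (samplingS π ω *ᵥ ((X * T) *ᵥ d)) =
      (samplingS π ω *ᵥ ((X * T) *ᵥ d)) ⬝ᵥ (samplingS π ω *ᵥ olsResid X y) := by
    have h1 : ((samplingS π ω * X)ᵀ * (samplingS π ω * X)) *ᵥ betaTilde X y π ω =
        (samplingS π ω * X)ᵀ *ᵥ (samplingS π ω *ᵥ y) := by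
      rw [betaTilde, mulVec_mulVec, mul_nonsing_inv _ hunit, one_mulVec]
    have h2 : (samplingS π ω * X)ᵀ *ᵥ (samplingS π ω *ᵥ ((X * T) *ᵥ d)) =
        (samplingS π ω * X)ᵀ *ᵥ (samplingS π ω *ᵥ olsResid X y) := by
      rw [← hXd, olsResid, mulVec_sub X, mulVec_sub (samplingS π ω), mulVec_sub (samplingS π ω),
        mulVec_sub, mulVec_sub, ← h1]
      simp only [mulVec_mulVec]
    have h3 : ∀ b, (samplingS π ω *ᵥ ((X * T) *ᵥ d)) ⬝ᵥ b =
        (betaTilde X y π ω - olsSol X y) ⬝ᵥ ((samplingS π ω * X)ᵀ *ᵥ b) := fun b => by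
      rw [← hXd, mulVec_mulVec, dotProduct_mulVec, vecMul_transpose]
    rw [h3, h2, ← h3]
  have hv : (samplingS π ω *ᵥ ((X * T) *ᵥ d)) ⬝ᵥ (samplingS π ω *ᵥ olsResid X y) =
      d ⬝ᵥ (fun k => (m : ℝ)⁻¹ * ∑ s, (X * T) (ω s) k * olsResid X y (ω s) / π (ω s)) := by
    rw [sketch_dot π hπ]
    simp only [dotProduct, mulVec, Finset.mul_sum, Finset.sum_mul, Finset.sum_div]
    rw [Finset.sum_comm]
    exact Finset.sum_congr rfl fun s _ => Finset.sum_congr rfl fun k _ => by ring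
  rw [hloss]
  have h1 := hgood d
  rw [hsk, hv] at h1
  have h2 := dotProduct_sq_le d
    (fun k => (m : ℝ)⁻¹ * ∑ s, (X * T) (ω s) k * olsResid X y (ω s) / π (ω s))
  have h3 : (fun k => (m : ℝ)⁻¹ * ∑ s, (X * T) (ω s) k * olsResid X y (ω s) / π (ω s)) ⬝ᵥ
      (fun k => (m : ℝ)⁻¹ * ∑ s, (X * T) (ω s) k * olsResid X y (ω s) / π (ω s)) =
      ∑ k, ((m : ℝ)⁻¹ * ∑ s, (X * T) (ω s) k * olsResid X y (ω s) / π (ω s)) ^ 2 :=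
    Finset.sum_congr rfl fun k _ => (sq _).symm
  rw [h3] at h2
  have h4 := dotProduct_self_nonneg' d
  have h5 := pow_le_pow_left₀ (mul_nonneg hγ.le h4) h1 2
  rcases h4.eq_or_lt with h0 | h0
  · rw [← h0, mul_zero]
    exact Finset.sum_nonneg fun _ _ => sq_nonneg _
  · refine le_of_mul_le_mul_left ?_ h0
    calc _ = (γ * (d ⬝ᵥ d)) ^ 2 := by ring
      _ ≤ _ := h5.trans h2

/-- The second moment of the projected sketched noise `Uᵀ Sᵀ S r` is `Δ(X)`. -/
lemma noise_second_moment {n p m : ℕ} (X : Matrix (Fin n) (Fin p) ℝ) (y : Fin n → ℝ)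
    (π : Fin n → ℝ) (hπ : ∀ i, 0 < π i) (hsum : ∑ i, π i = 1) (hX : IsUnit (Xᵀ * X).det)
    (T : Matrix (Fin p) (Fin p) ℝ) (hT : T * Tᵀ = (Xᵀ * X)⁻¹) (hm : 0 < m) :
    ∑ ω : Fin m → Fin n, samplingP π ω *
      ∑ k, ((m : ℝ)⁻¹ * ∑ s, (X * T) (ω s) k * olsResid X y (ω s) / π (ω s)) ^ 2 =
    deltaOLS X y π m := by
  have hm' : (m : ℝ) ≠ 0 := by positivity
  have hnormal : Xᵀ *ᵥ olsResid X y = 0 := by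
    rw [olsResid, olsSol, mulVec_sub, mulVec_mulVec, mulVec_mulVec, mul_nonsing_inv _ hX,
      one_mulVec, sub_self]
  have hcent : ∀ k, ∑ i, π i * ((X * T) i k * olsResid X y i / π i) = 0 := by
    intro k
    have h1 : ((X * T)ᵀ *ᵥ olsResid X y) k = 0 := by
      rw [transpose_mul, ← mulVec_mulVec, hnormal]; simp
    rw [← h1]
    simp only [mulVec, dotProduct, transpose_apply]
    exact Finset.sum_congr rfl fun i _ => mul_div_cancel₀ _ (hπ i).ne'
  have h2 : ∀ k, ∑ ω : Fin m → Fin n, samplingP π ω *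
      ((m : ℝ)⁻¹ * ∑ s, (X * T) (ω s) k * olsResid X y (ω s) / π (ω s)) ^ 2 =
      (m : ℝ)⁻¹ * ∑ i, ((X * T) i k) ^ 2 * olsResid X y i ^ 2 / π i := by
    intro k
    have := expect_sum_sq_centered π hsum (fun i => (X * T) i k * olsResid X y i / π i) (hcent k) m
    calc _ = ((m : ℝ)⁻¹) ^ 2 * ∑ ω : Fin m → Fin n, samplingP π ω *
          (∑ s, (X * T) (ω s) k * olsResid X y (ω s) / π (ω s)) ^ 2 := by
          rw [Finset.mul_sum]
          exact Finset.sum_congr rfl fun ω _ => by ring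
      _ = (m : ℝ)⁻¹ * ∑ i, π i * ((X * T) i k * olsResid X y i / π i) ^ 2 := by
          rw [this]; field_simp
      _ = _ := by
          congr 1
          refine Finset.sum_congr rfl fun i _ => ?_
          have := (hπ i).ne'
          field_simp
  simp only [Finset.mul_sum (Finset.univ : Finset (Fin p))]
  rw [Finset.sum_comm]
  simp only [h2]
  rw [deltaOLS, ← Finset.mul_sum, Finset.sum_comm, Finset.mul_sum]
  simp only [dotProduct, mulVec_diagonal]
  refine Finset.sum_congr rfl fun i _ => ?_
  rw [lev_eq_of_whitening X T hT]
  simp only [dotProduct, Finset.sum_mul, Finset.mul_sum, Finset.sum_div]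
  refine Finset.sum_congr rfl fun k _ => ?_
  have := (hπ i).ne'
  field_simp

/-- Isotropy of the importance-weighted rows of an orthonormal design. -/
lemma isotropic_rows {n p : ℕ} (U : Matrix (Fin n) (Fin p) ℝ) (hU : Uᵀ * U = 1)
    (π : Fin n → ℝ) (hπ : ∀ i, 0 < π i) :
    ∑ i, π i • vecMulVec ((1 / Real.sqrt (π i)) • U i) ((1 / Real.sqrt (π i)) • U i) = 1 := by
  rw [← hU]
  ext a b
  rw [Matrix.sum_apply, Matrix.mul_apply]
  refine Finset.sum_congr rfl fun i _ => ?_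
  have h1 := Real.mul_self_sqrt (hπ i).le
  simp only [Matrix.smul_apply, vecMulVec_apply, Pi.smul_apply, smul_eq_mul, transpose_apply]
  calc _ = π i / (Real.sqrt (π i) * Real.sqrt (π i)) * (U i a * U i b) := by ring
    _ = _ := by rw [h1, div_self (hπ i).ne', one_mul]

/-! ### The variance bound -/

/-- **Variance upper bound for subsampled OLS** (Theorem 4.3): there are
absolute constants `C, C' > 0` such that for every `δ ∈ (0,1)` and every
`m ≥ C θ_max(X) p log(p/δ)`, there is an event `ζ` of probability at least
`1 − δ` on which the sketched Gram matrices are invertible and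
`Var_ζ(β̃) ≤ (1 − δ)⁻¹ (Δ(X) + ε ‖r‖²)` with
`ε = C' √(log(p/δ) θ_max(X)³ p³/m³)`. -/
theorem subsampled_ols_variance_upper_bound :
    ∃ C C' : ℝ, 0 < C ∧ 0 < C' ∧
      ∀ (n p m : ℕ) (X : Matrix (Fin n) (Fin p) ℝ) (y : Fin n → ℝ)
        (π : Fin n → ℝ),
        1 ≤ p → p ≤ n →
        IsUnit (Xᵀ * X).det →
        (∀ i, 0 < π i) → (∑ i, π i = 1) →
        ∀ δ : ℝ, 0 < δ → δ < 1 →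
        C * thetaMax X π * p * Real.log (p / δ) ≤ m →
        ∃ ζ : Finset (Fin m → Fin n),
          1 - δ ≤ eventProb (samplingP π) ζ ∧
          (∀ ω ∈ ζ,
            IsUnit ((samplingS π ω * X)ᵀ * (samplingS π ω * X)).det) ∧
          condExp (samplingP π) ζ (fun ω => lossL X y (betaTilde X y π ω)) -
              lossL X y (olsSol X y)
            ≤ (1 - δ)⁻¹ *
              (deltaOLS X y π m +
                C' * Real.sqrt (Real.log (p / δ) * thetaMax X π ^ 3 * p ^ 3 / m ^ 3) *
                  (olsResid X y ⬝ᵥ olsResid X y)) := by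
  refine ⟨8, 9, by norm_num, by norm_num, ?_⟩
  intro n p m X y π hp _ hX hπ hsum δ hδ0 hδ1 hm
  obtain ⟨T, hU, hTinv, hT⟩ := exists_whitening X hX
  have hp0 : (0 : ℝ) < p := by exact_mod_cast hp
  have hp1 : (1 : ℝ) ≤ p := by exact_mod_cast hp
  obtain ⟨L, hLdef⟩ : ∃ L, L = Real.log (p / δ) := ⟨_, rfl⟩
  obtain ⟨R, hRdef⟩ : ∃ R, R = thetaMax X π * p := ⟨_, rfl⟩
  have hL : 0 < L := by
    rw [hLdef]
    exact Real.log_pos (by rw [lt_div_iff₀ hδ0]; linarith)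
  have hlev : ∀ i, lev X i ≤ R * π i := by
    intro i
    have h1 : lev X i / (p * π i) ≤ thetaMax X π :=
      le_ciSup (f := fun i => lev X i / (p * π i)) (Set.finite_range _).bddAbove i
    rw [div_le_iff₀ (mul_pos hp0 (hπ i))] at h1
    rw [hRdef]
    linarith
  have hlevsum : ∑ i, lev X i = p := by
    have h1 : ((X * T)ᵀ * (X * T)).trace = p := by rw [hU]; simp
    rw [← h1]
    simp only [lev_eq_of_whitening X T hTinv, trace, diag_apply, Matrix.mul_apply, dotProduct,
      transpose_apply]
    rw [Finset.sum_comm]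
  have hR1 : 1 ≤ R := by
    have h1 : ∑ i, lev X i ≤ ∑ i, R * π i := Finset.sum_le_sum fun i _ => hlev i
    rw [hlevsum, ← Finset.mul_sum, hsum, mul_one] at h1
    linarith
  have hR0 : 0 < R := by linarith
  have hmL : 8 * R * L ≤ m := by
    rw [hRdef, hLdef]; linarith
  have hm0 : (0 : ℝ) < m := lt_of_lt_of_le (by positivity) hmL
  have hmpos : 0 < m := by exact_mod_cast hm0
  -- `η` is the distortion at which the Chernoff bound equals `δ`
  obtain ⟨η, hηdef⟩ : ∃ η, η = Real.sqrt (2 * R * L / m) := ⟨_, rfl⟩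
  have hη0 : 0 < η := by rw [hηdef]; exact Real.sqrt_pos.2 (by positivity)
  have hηsq : η ^ 2 = 2 * R * L / m := by rw [hηdef]; exact Real.sq_sqrt (by positivity)
  have hη1 : η ≤ 1 / 2 := by
    have h1 : η ^ 2 ≤ (1 / 2) ^ 2 := by
      rw [hηsq, div_le_iff₀ hm0]; linarith
    exact le_of_sq_le_sq h1 (by norm_num)
  have hγ : 0 < 1 - η := by linarith
  obtain ⟨w, hwdef⟩ : ∃ w : Fin n → Fin p → ℝ, w = fun i => (1 / Real.sqrt (π i)) • (X * T) i :=
    ⟨_, rfl⟩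
  have hwdot : ∀ i x, (w i ⬝ᵥ x) ^ 2 = ((X * T) i ⬝ᵥ x) * ((X * T) i ⬝ᵥ x) / π i := by
    intro i x
    rw [hwdef]
    simp only [smul_dotProduct, smul_eq_mul]
    rw [mul_pow, div_pow, Real.sq_sqrt (hπ i).le]
    ring
  have hwR : ∀ i, w i ⬝ᵥ w i ≤ R := by
    intro i
    have h1 : w i ⬝ᵥ w i = lev X i / π i := by
      rw [lev_eq_of_whitening X T hTinv, hwdef]
      simp only [smul_dotProduct, dotProduct_smul, smul_eq_mul]
      rw [← mul_assoc, div_mul_div_comm, Real.mul_self_sqrt (hπ i).le]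
      ring
    rw [h1, div_le_iff₀ (hπ i)]
    exact hlev i
  classical
  obtain ⟨ζ, hζ⟩ : ∃ ζ : Finset (Fin m → Fin n), ζ = Finset.univ.filter fun ω =>
      ∀ x : Fin p → ℝ, (1 - η) * m * (x ⬝ᵥ x) ≤ ∑ s, (w (ω s) ⬝ᵥ x) ^ 2 := ⟨_, rfl⟩
  have hP0 : ∀ ω : Fin m → Fin n, 0 ≤ samplingP π ω := samplingP_nonneg π hπ
  have hbad : eventProb (samplingP π) ζᶜ ≤ δ := by
    have h1 := matrix_chernoff π w hπ hsum R (η / R) ((1 - η) * m)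
      (by rw [hwdef]; exact isotropic_rows (X * T) hU π hπ) hwR hR0.le (by positivity)
      (by rw [div_le_one hR0]; linarith) (by positivity) m ζᶜ (fun ω hω => by
        rw [hζ] at hω
        simpa using hω)
    have h2 : (1 - η) * m * (η / R) - m * (η / R) + m * (R * (η / R) ^ 2 / 2) = -L := by
      have : L = η ^ 2 * m / (2 * R) := by rw [hηsq]; field_simp
      rw [this]
      field_simp
      ring
    rw [h2, Real.exp_neg, hLdef, Real.exp_log (by positivity)] at h1
    refine h1.trans_eq ?_
    field_simp
  have hprob : 1 - δ ≤ eventProb (samplingP π) ζ := by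
    have h1 : eventProb (samplingP π) ζ + eventProb (samplingP π) ζᶜ = 1 := by
      rw [eventProb, eventProb, Finset.sum_add_sum_compl, sum_samplingP π hsum]
    linarith
  have hgood : ∀ ω ∈ ζ, IsUnit ((samplingS π ω * X)ᵀ * (samplingS π ω * X)).det ∧
      (1 - η) ^ 2 * (lossL X y (betaTilde X y π ω) - lossL X y (olsSol X y)) ≤
      ∑ k, ((m : ℝ)⁻¹ * ∑ s, (X * T) (ω s) k * olsResid X y (ω s) / π (ω s)) ^ 2 := by
    intro ω hω
    refine good_event X y π hπ hX T hU hT ω (1 - η) hγ fun x => ?_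
    have h1 : (1 - η) * m * (x ⬝ᵥ x) ≤ ∑ s, (w (ω s) ⬝ᵥ x) ^ 2 := by
      rw [hζ] at hω
      exact (Finset.mem_filter.1 hω).2 x
    rw [sketch_dot π hπ, le_inv_mul_iff₀ hm0]
    calc m * ((1 - η) * (x ⬝ᵥ x)) = (1 - η) * m * (x ⬝ᵥ x) := by ring
      _ ≤ _ := h1
      _ = _ := Finset.sum_congr rfl fun s _ => hwdot _ _
  refine ⟨ζ, hprob, fun ω hω => (hgood ω hω).1, ?_⟩
  have hPζ : 0 < eventProb (samplingP π) ζ := by linarith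
  have hcond : condExp (samplingP π) ζ (fun ω => lossL X y (betaTilde X y π ω)) -
      lossL X y (olsSol X y) = (eventProb (samplingP π) ζ)⁻¹ * ∑ ω ∈ ζ, samplingP π ω *
        (lossL X y (betaTilde X y π ω) - lossL X y (olsSol X y)) := by
    have h1 : ∑ ω ∈ ζ, samplingP π ω * lossL X y (olsSol X y) =
        eventProb (samplingP π) ζ * lossL X y (olsSol X y) := by
      rw [← Finset.sum_mul]; rfl
    simp only [condExp, smul_eq_mul, mul_sub, Finset.sum_sub_distrib, h1]
    rw [inv_mul_cancel_left₀ hPζ.ne']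
  have hΔ : (1 - η) ^ 2 * ∑ ω ∈ ζ, samplingP π ω *
      (lossL X y (betaTilde X y π ω) - lossL X y (olsSol X y)) ≤ deltaOLS X y π m := by
    rw [← noise_second_moment X y π hπ hsum hX T hTinv hmpos, Finset.mul_sum]
    refine (Finset.sum_le_sum fun ω hω => ?_).trans
      (Finset.sum_le_sum_of_subset_of_nonneg (Finset.subset_univ ζ) fun ω _ _ =>
        mul_nonneg (hP0 ω) (Finset.sum_nonneg fun _ _ => sq_nonneg _))
    calc _ = samplingP π ω * ((1 - η) ^ 2 *
          (lossL X y (betaTilde X y π ω) - lossL X y (olsSol X y))) := by ring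
      _ ≤ _ := mul_le_mul_of_nonneg_left (hgood ω hω).2 (hP0 ω)
  have hΔeq : deltaOLS X y π m = ∑ i, lev X i / (m * π i) * olsResid X y i ^ 2 := by
    simp only [deltaOLS, dotProduct, mulVec_diagonal]
    exact Finset.sum_congr rfl fun i _ => by ring
  have hlev0 : ∀ i, 0 ≤ lev X i := fun i => by
    rw [lev_eq_of_whitening X T hTinv]; exact dotProduct_self_nonneg' _
  have hΔ0 : 0 ≤ deltaOLS X y π m := by
    rw [hΔeq]
    exact Finset.sum_nonneg fun i _ =>
      mul_nonneg (div_nonneg (hlev0 i) (mul_nonneg hm0.le (hπ i).le)) (sq_nonneg _)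
  have hΔR : deltaOLS X y π m ≤ R / m * (olsResid X y ⬝ᵥ olsResid X y) := by
    rw [hΔeq, dotProduct, Finset.mul_sum]
    refine Finset.sum_le_sum fun i _ => ?_
    rw [← sq]
    refine mul_le_mul_of_nonneg_right ?_ (sq_nonneg _)
    rw [div_le_div_iff₀ (mul_pos hm0 (hπ i)) hm0]
    nlinarith [hlev i]
  have hr0 := dotProduct_self_nonneg' (olsResid X y)
  -- `(1 - η)⁻² ≤ 1 + 6η` on `[0, 1/2]`
  have hexp : ∑ ω ∈ ζ, samplingP π ω *
      (lossL X y (betaTilde X y π ω) - lossL X y (olsSol X y)) ≤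
      (1 + 6 * η) * deltaOLS X y π m := by
    have h1 : 1 ≤ (1 - η) ^ 2 * (1 + 6 * η) := by
      nlinarith [mul_nonneg hη0.le (sub_nonneg.2 hη1), mul_nonneg (mul_nonneg hη0.le hη0.le)
        (sub_nonneg.2 hη1)]
    refine le_of_mul_le_mul_left (hΔ.trans ?_) (pow_pos hγ 2)
    rw [← mul_assoc]
    exact le_mul_of_one_le_left hΔ0 h1
  have hε : 6 * η * (R / m) ≤
      9 * Real.sqrt (Real.log (p / δ) * thetaMax X π ^ 3 * p ^ 3 / m ^ 3) := by
    have h1 : Real.log (p / δ) * thetaMax X π ^ 3 * p ^ 3 / m ^ 3 = L * R ^ 3 / m ^ 3 := by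
      rw [hLdef, hRdef]; ring
    rw [h1]
    have h2 : 6 * η * (R / m) / 9 ≤ Real.sqrt (L * R ^ 3 / m ^ 3) := by
      refine Real.le_sqrt_of_sq_le ?_
      have h3 : (6 * η * (R / m) / 9) ^ 2 = 8 / 9 * (L * R ^ 3 / m ^ 3) := by
        rw [div_pow, mul_pow, mul_pow, hηsq]; field_simp; norm_num
      rw [h3]
      have : 0 ≤ L * R ^ 3 / m ^ 3 := by positivity
      linarith
    linarith
  rw [hcond]
  calc _ ≤ (eventProb (samplingP π) ζ)⁻¹ * ((1 + 6 * η) * deltaOLS X y π m) :=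
        mul_le_mul_of_nonneg_left hexp (inv_nonneg.2 hPζ.le)
    _ ≤ (1 - δ)⁻¹ * ((1 + 6 * η) * deltaOLS X y π m) := by
        refine mul_le_mul_of_nonneg_right ?_ (mul_nonneg (by linarith) hΔ0)
        exact inv_anti₀ (by linarith) hprob
    _ ≤ _ := by
        refine mul_le_mul_of_nonneg_left ?_ (inv_nonneg.2 (by linarith))
        have h1 := mul_le_mul_of_nonneg_left hΔR (by positivity : (0 : ℝ) ≤ 6 * η)
        have h2 := mul_le_mul_of_nonneg_right hε hr0
        linarith

end
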